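/- Let d ≥ 2 and μ > −1. For every function f that is twice continuously differentiable on a neighborhood of a point x in the open unit ball of ℝ^d with x ≠ 0, the spectral operator 𝒟_μ satisfies the pointwise identity 𝒟_μ f(x) = (1−‖x‖²)^{−μ} ‖x‖^{−d} · ⟨x,∇⟩[ y ↦ ‖y‖^{d−2}(1−‖y‖²)^{μ+1} (⟨y,∇⟩f)(y) ](x) + ‖x‖^{−2} Σ_{1≤i<j≤d} D_{i,j}² f(x), where ⟨x,∇⟩ = Σ_{i=1}^d x_i ∂_i. -/

import Mathlib

/-!
Write `E = ⟨x,∇⟩`, `Q = Σ_{i,j} x_i x_j ∂_i∂_j f` and `r = ‖x‖`. The identity follows by expanding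
both sides in terms of `Δf`, `Q` and `E f`.

* `E f (x)` is the derivative of `f` at `x` in the direction `x`, so `E` is a derivation with
  `E r = r` and `E (E f) = Q + E f` (`xgrad_xgrad`). By the product and chain rules
  (`xgrad_weighted`) the radial term is
  `r⁻² ((d-1)(1-r²) E f - 2(μ+1) r² E f + (1-r²) Q)`.
* Summing the expansion of `D_{i,j}²` over `i < j`, which by symmetry is half of the sum over all
  pairs minus the diagonal, the angular sum is `r² Δf - Q - (d-1) E f` (`sum_DijF_DijF`). The
  symmetry of second derivatives enters here.

The total is `Δf - Q - (d+2μ+1) E f`, which is `𝒟_μ f`.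
-/

open MeasureTheory Real MvPolynomial Finset
open scoped ENNReal

noncomputable section

/-- The Euclidean norm of `x ∈ ℝ^d`. -/
def eunorm {d : ℕ} (x : Fin d → ℝ) : ℝ := Real.sqrt (∑ i, (x i) ^ 2)

/-- The closed unit ball `B^d = {x : ‖x‖ ≤ 1}` in `ℝ^d` (Euclidean norm). -/
def Bd (d : ℕ) : Set (Fin d → ℝ) := {x | eunorm x ≤ 1}

/-- The metric `d_B(x,y) = arccos(⟨x,y⟩ + √(1-‖x‖²)√(1-‖y‖²))` on the unit ball. -/
def distB {d : ℕ} (x y : Fin d → ℝ) : ℝ :=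
  Real.arccos ((∑ i, x i * y i) +
    Real.sqrt (1 - eunorm x ^ 2) * Real.sqrt (1 - eunorm y ^ 2))

/-- The metric ball `{y ∈ B^d : d_B(x,y) < r}`. -/
def ballB {d : ℕ} (x : Fin d → ℝ) (r : ℝ) : Set (Fin d → ℝ) :=
  {y | y ∈ Bd d ∧ distB x y < r}

/-- `W` is a doubling weight on the unit ball `B^d` with respect to the metric `d_B`. -/
def IsDoublingBall (d : ℕ) (W : (Fin d → ℝ) → ℝ) : Prop :=
  ∃ L > (0 : ℝ), ∀ x ∈ Bd d, ∀ r : ℝ, 0 < r →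
    ∫ y in ballB x (2 * r), W y ≤ L * ∫ y in ballB x r, W y

/-- The standard simplex `Δ^d = {x : x_i ≥ 0, x_1 + ⋯ + x_d ≤ 1}`. -/
def Td (d : ℕ) : Set (Fin d → ℝ) := {x | (∀ i, 0 ≤ x i) ∧ ∑ i, x i ≤ 1}

/-- The metric `d_Δ(x,y) = arccos(Σ √(x_i y_i) + √((1-|x|)(1-|y|)))` on the simplex. -/
def distT {d : ℕ} (x y : Fin d → ℝ) : ℝ :=
  Real.arccos ((∑ i, Real.sqrt (x i * y i)) +
    Real.sqrt ((1 - ∑ i, x i) * (1 - ∑ i, y i)))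

/-- The metric ball `{y ∈ Δ^d : d_Δ(x,y) < r}`. -/
def ballT {d : ℕ} (x : Fin d → ℝ) (r : ℝ) : Set (Fin d → ℝ) :=
  {y | y ∈ Td d ∧ distT x y < r}

/-- `W` is a doubling weight on the simplex `Δ^d` with respect to the metric `d_Δ`. -/
def IsDoublingSimplex (d : ℕ) (W : (Fin d → ℝ) → ℝ) : Prop :=
  ∃ L > (0 : ℝ), ∀ x ∈ Td d, ∀ r : ℝ, 0 < r →
    ∫ y in ballT x (2 * r), W y ≤ L * ∫ y in ballT x r, W y

/-- Weighted `L^p` norm on the unit ball: for `p < ∞` it is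
`(∫_{B^d} |f|^p W)^{1/p}`, and for `p = ∞` the sup norm on `B^d`. -/
def lpNormB (d : ℕ) (W : (Fin d → ℝ) → ℝ) (p : ℝ≥0∞) (f : (Fin d → ℝ) → ℝ) : ℝ :=
  if p = ⊤ then ⨆ x : Bd d, |f x.1|
  else (∫ x in Bd d, |f x| ^ p.toReal * W x) ^ (1 / p.toReal)

/-- Weighted `L^p` norm on the simplex: for `p < ∞` it is
`(∫_{Δ^d} |f|^p W)^{1/p}`, and for `p = ∞` the sup norm on `Δ^d`. -/
def lpNormT (d : ℕ) (W : (Fin d → ℝ) → ℝ) (p : ℝ≥0∞) (f : (Fin d → ℝ) → ℝ) : ℝ :=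
  if p = ⊤ then ⨆ x : Td d, |f x.1|
  else (∫ x in Td d, |f x| ^ p.toReal * W x) ^ (1 / p.toReal)

/-- Evaluation of a real polynomial in `d` variables at a point of `ℝ^d`. -/
def evalP {d : ℕ} (f : MvPolynomial (Fin d) ℝ) (x : Fin d → ℝ) : ℝ :=
  MvPolynomial.eval x f

/-- The angular derivative `D_{i,j} = x_i ∂_j − x_j ∂_i` acting on polynomials. -/
def Dpoly {d : ℕ} (i j : Fin d) (f : MvPolynomial (Fin d) ℝ) : MvPolynomial (Fin d) ℝ :=
  X i * pderiv j f - X j * pderiv i f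

/-- The classical weight `W_μ(x) = (1−‖x‖²)^μ` on the unit ball. -/
def Wmu (d : ℕ) (μ : ℝ) (x : Fin d → ℝ) : ℝ := (1 - eunorm x ^ 2) ^ μ

/-- The squared weighted `L²(W_μ, B^d)` norm `‖f‖²_{μ,2} = ∫_{B^d} f² W_μ`. -/
def sqNormMu (d : ℕ) (μ : ℝ) (f : (Fin d → ℝ) → ℝ) : ℝ :=
  ∫ x in Bd d, (f x) ^ 2 * Wmu d μ x

/-- The weighted `L²(W_μ, B^d)` norm `‖f‖_{μ,2}`. -/
def normMu (d : ℕ) (μ : ℝ) (f : (Fin d → ℝ) → ℝ) : ℝ :=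
  Real.sqrt (sqNormMu d μ f)

/-- `f ∈ 𝒱_n(W_μ, B^d)`: a polynomial of total degree at most `n`, orthogonal in
`L²(W_μ, B^d)` to every polynomial of total degree less than `n`. -/
def memV (d : ℕ) (μ : ℝ) (n : ℕ) (f : MvPolynomial (Fin d) ℝ) : Prop :=
  f.totalDegree ≤ n ∧ ∀ g : MvPolynomial (Fin d) ℝ, g.totalDegree < n →
    ∫ x in Bd d, evalP f x * evalP g x * Wmu d μ x = 0

/-- The spectral operator `𝒟_μ` acting on polynomials. -/
def DmuP (d : ℕ) (μ : ℝ) (f : MvPolynomial (Fin d) ℝ) : MvPolynomial (Fin d) ℝ :=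
  (∑ i, (1 - X i ^ 2) * pderiv i (pderiv i f))
    - 2 * (∑ i, ∑ j ∈ Finset.Ioi i, X i * X j * pderiv i (pderiv j f))
    - C ((d : ℝ) + 2 * μ + 1) * ∑ i, X i * pderiv i f

/-- The partial derivative `∂_i` of a function on `ℝ^d`. -/
def pd {d : ℕ} (i : Fin d) (f : (Fin d → ℝ) → ℝ) (x : Fin d → ℝ) : ℝ :=
  fderiv ℝ f x (Pi.single i 1)

/-- `⟨x,∇⟩f(x) = Σ_i x_i ∂_i f(x)`. -/
def xgrad {d : ℕ} (f : (Fin d → ℝ) → ℝ) (x : Fin d → ℝ) : ℝ :=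
  ∑ i, x i * pd i f x

/-- The angular derivative `D_{i,j} = x_i ∂_j − x_j ∂_i` acting on functions. -/
def DijF {d : ℕ} (i j : Fin d) (f : (Fin d → ℝ) → ℝ) (x : Fin d → ℝ) : ℝ :=
  x i * pd j f x - x j * pd i f x

/-- The spectral operator `𝒟_μ` acting on functions. -/
def DmuF (d : ℕ) (μ : ℝ) (f : (Fin d → ℝ) → ℝ) (x : Fin d → ℝ) : ℝ :=
  (∑ i, (1 - x i ^ 2) * pd i (pd i f) x)
    - 2 * (∑ i, ∑ j ∈ Finset.Ioi i, x i * x j * pd i (pd j f) x)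
    - ((d : ℝ) + 2 * μ + 1) * ∑ i, x i * pd i f x


theorem clm_apply_eq_sum {d : ℕ} (L : (Fin d → ℝ) →L[ℝ] ℝ) (v : Fin d → ℝ) :
    L v = ∑ i, v i * L (Pi.single i 1) := by
  conv_lhs => rw [pi_eq_sum_univ' v, map_sum]
  simp only [map_smul, smul_eq_mul]

/-- The Euler operator is the derivative of `f` at `x` in the direction `x`. -/
theorem xgrad_eq_fderiv {d : ℕ} (f : (Fin d → ℝ) → ℝ) (x : Fin d → ℝ) :
    xgrad f x = fderiv ℝ f x x := by
  exact (clm_apply_eq_sum _ x).symm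

theorem eunorm_sq {d : ℕ} (x : Fin d → ℝ) : eunorm x ^ 2 = ∑ i, x i ^ 2 :=
  Real.sq_sqrt (Finset.sum_nonneg fun i _ => sq_nonneg (x i))

theorem eunorm_pos {d : ℕ} {x : Fin d → ℝ} (hx : x ≠ 0) : 0 < eunorm x := by
  obtain ⟨i, hi⟩ := Function.ne_iff.mp hx
  have hi' : x i ≠ 0 := hi
  exact Real.sqrt_pos.mpr <| Finset.sum_pos' (fun j _ => sq_nonneg (x j))
    ⟨i, Finset.mem_univ i, by positivity⟩

/-- The norm is homogeneous of degree one, so the Euler operator fixes it. -/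
theorem hasFDerivAt_eunorm {d : ℕ} {x : Fin d → ℝ} (hx : x ≠ 0) :
    ∃ L : (Fin d → ℝ) →L[ℝ] ℝ, HasFDerivAt eunorm L x ∧ L x = eunorm x := by
  have hs : HasFDerivAt (fun y : Fin d → ℝ => ∑ i, y i ^ 2)
      (∑ i, (2 * x i) • ContinuousLinearMap.proj (R := ℝ) (φ := fun _ : Fin d => ℝ) i) x := by
    refine HasFDerivAt.fun_sum fun i _ => ?_
    simpa using (hasFDerivAt_apply (𝕜 := ℝ) i x).pow 2
  have hr := eunorm_pos hx
  have hne : ∑ i, x i ^ 2 ≠ 0 := by rw [← eunorm_sq]; positivity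
  refine ⟨_, hs.sqrt hne, ?_⟩
  have h2 : ∑ i, 2 * x i * x i = 2 * eunorm x ^ 2 := by
    rw [eunorm_sq, Finset.mul_sum]
    exact Finset.sum_congr rfl fun i _ => by ring
  simp only [_root_.smul_apply, _root_.sum_apply,
    ContinuousLinearMap.proj_apply, smul_eq_mul, h2]
  change 1 / (2 * eunorm x) * (2 * eunorm x ^ 2) = eunorm x
  field_simp

/-- The radial term, with a real exponent `a` in place of the dimension and any differentiable `g`
in place of `⟨y,∇⟩f`. -/
theorem xgrad_weighted {d : ℕ} {a μ : ℝ} {g : (Fin d → ℝ) → ℝ} {x : Fin d → ℝ}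
    (hg : DifferentiableAt ℝ g x) (hx0 : x ≠ 0) (hx1 : eunorm x < 1) :
    (1 - eunorm x ^ 2) ^ (-μ) * eunorm x ^ (-a) *
      xgrad (fun y => eunorm y ^ (a - 2) * (1 - eunorm y ^ 2) ^ (μ + 1) * g y) x =
    (eunorm x ^ 2)⁻¹ * ((a - 2) * (1 - eunorm x ^ 2) * g x
      - 2 * (μ + 1) * eunorm x ^ 2 * g x + (1 - eunorm x ^ 2) * xgrad g x) := by
  obtain ⟨L, hL, hLx⟩ := hasFDerivAt_eunorm hx0
  have hr := eunorm_pos hx0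
  have hw : 0 < 1 - eunorm x ^ 2 := by nlinarith
  have h1 := hL.rpow_const (p := a - 2) (Or.inl hr.ne')
  have h2 := ((hL.pow 2).const_sub 1).rpow_const (p := μ + 1) (Or.inl hw.ne')
  have h3 := (h1.mul h2).mul hg.hasFDerivAt
  rw [xgrad_eq_fderiv, xgrad_eq_fderiv]
  erw [h3.fderiv]
  simp only [_root_.add_apply, _root_.smul_apply,
    _root_.neg_apply, smul_eq_mul, hLx, Pi.mul_apply, nsmul_eq_mul]
  have e1 : eunorm x ^ (a - 2) = eunorm x ^ a * (eunorm x ^ 2)⁻¹ := by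
    rw [Real.rpow_sub hr, Real.rpow_two]; rfl
  have e2 : eunorm x ^ (a - 2 - 1) = eunorm x ^ a * (eunorm x ^ 2)⁻¹ * (eunorm x)⁻¹ := by
    rw [Real.rpow_sub_one hr.ne', e1]; rfl
  have e3 : (1 - eunorm x ^ 2) ^ (μ + 1) = (1 - eunorm x ^ 2) ^ μ * (1 - eunorm x ^ 2) :=
    Real.rpow_add_one hw.ne' μ
  have e4 : μ + 1 - 1 = μ := by ring
  rw [e1, e2, e4, e3, Real.rpow_neg hw.le, Real.rpow_neg hr.le]
  have p1 : (1 - eunorm x ^ 2) ^ μ ≠ 0 := (Real.rpow_pos_of_pos hw μ).ne'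
  have p2 : eunorm x ^ a ≠ 0 := (Real.rpow_pos_of_pos hr a).ne'
  generalize (1 - eunorm x ^ 2) ^ μ = A at *
  generalize eunorm x ^ a = B at *
  field_simp
  push_cast
  ring

/-- The sum of a symmetric function over pairs `i < j` is half of the off-diagonal sum. -/
theorem sum_Ioi_of_symm {d : ℕ} (g : Fin d → Fin d → ℝ) (hg : ∀ i j, g i j = g j i) :
    2 * ∑ i, ∑ j ∈ Finset.Ioi i, g i j = ∑ i, ∑ j, g i j - ∑ i, g i i := by
  have hsplit : ∀ i, ∑ j, g i j =
      ∑ j ∈ Finset.Ioi i, g i j + g i i + ∑ j ∈ Finset.Iio i, g i j := by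
    intro i
    rw [← Finset.sum_filter_add_sum_filter_not Finset.univ (fun j => i < j)]
    have h1 : Finset.univ.filter (fun j => i < j) = Finset.Ioi i := by ext; simp
    have h2 : Finset.univ.filter (fun j => ¬ i < j) = insert i (Finset.Iio i) := by
      ext j; simp [le_iff_eq_or_lt]
    rw [h1, h2, Finset.sum_insert (by simp)]
    ring
  have hswap : ∑ i, ∑ j ∈ Finset.Iio i, g i j = ∑ i, ∑ j ∈ Finset.Ioi i, g i j := by
    rw [Finset.sum_comm' (t' := Finset.univ) (s' := fun j => Finset.Ioi j) (by simp)]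
    exact Finset.sum_congr rfl fun i _ => Finset.sum_congr rfl fun j _ => hg j i
  simp_rw [hsplit, Finset.sum_add_distrib, hswap]
  ring

theorem hasFDerivAt_pd {d : ℕ} {f : (Fin d → ℝ) → ℝ} {x : Fin d → ℝ}
    (hf : DifferentiableAt ℝ (fderiv ℝ f) x) (j : Fin d) :
    HasFDerivAt (pd j f) ((fderiv ℝ (fderiv ℝ f) x).flip (Pi.single j 1)) x := by
  have h := hf.hasFDerivAt.clm_apply (hasFDerivAt_const (Pi.single j (1 : ℝ)) x)
  rw [ContinuousLinearMap.comp_zero, zero_add] at h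
  exact h

theorem pd_pd {d : ℕ} {f : (Fin d → ℝ) → ℝ} {x : Fin d → ℝ}
    (hf : DifferentiableAt ℝ (fderiv ℝ f) x) (i j : Fin d) :
    pd i (pd j f) x = fderiv ℝ (fderiv ℝ f) x (Pi.single i 1) (Pi.single j 1) := by
  rw [pd, (hasFDerivAt_pd hf j).fderiv]
  rfl

theorem pd_DijF {d : ℕ} {f : (Fin d → ℝ) → ℝ} {x : Fin d → ℝ}
    (hf : DifferentiableAt ℝ (fderiv ℝ f) x) (i j k : Fin d) :
    pd k (DijF i j f) x =
      (Pi.single k 1 : Fin d → ℝ) i * pd j f x + x i * pd k (pd j f) x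
      - ((Pi.single k 1 : Fin d → ℝ) j * pd i f x + x j * pd k (pd i f) x) := by
  have h := ((hasFDerivAt_apply (𝕜 := ℝ) i x).mul (hasFDerivAt_pd hf j)).sub
    ((hasFDerivAt_apply (𝕜 := ℝ) j x).mul (hasFDerivAt_pd hf i))
  rw [pd_pd hf, pd_pd hf, pd]
  erw [h.fderiv]
  simp
  ring

/-- The hypothesis `i ≠ j` is needed: for `i = j` the left side vanishes, while the right side is
`-2 x_i ∂_i f`. -/
theorem DijF_DijF {d : ℕ} {f : (Fin d → ℝ) → ℝ} {x : Fin d → ℝ}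
    (hf : DifferentiableAt ℝ (fderiv ℝ f) x) (hsymm : ∀ i j, pd i (pd j f) x = pd j (pd i f) x)
    {i j : Fin d} (hij : i ≠ j) :
    DijF i j (DijF i j f) x =
      x i ^ 2 * pd j (pd j f) x + x j ^ 2 * pd i (pd i f) x
      - 2 * (x i * x j * pd i (pd j f) x) - x i * pd i f x - x j * pd j f x := by
  rw [DijF, pd_DijF hf, pd_DijF hf, hsymm j i]
  simp [hij, hij.symm]
  ring

/-- The angular term: `Σ_{i<j} D_{i,j}² f = ‖x‖² Δf - Σ_{i,j} x_i x_j ∂_i∂_j f - (d-1)⟨x,∇⟩f`. -/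
theorem sum_DijF_DijF {d : ℕ} {f : (Fin d → ℝ) → ℝ} {x : Fin d → ℝ}
    (hf : DifferentiableAt ℝ (fderiv ℝ f) x)
    (hsymm : ∀ i j, pd i (pd j f) x = pd j (pd i f) x) :
    ∑ i, ∑ j ∈ Finset.Ioi i, DijF i j (DijF i j f) x =
      eunorm x ^ 2 * ∑ i, pd i (pd i f) x - ∑ i, ∑ j, x i * x j * pd i (pd j f) x
      - ((d : ℝ) - 1) * xgrad f x := by
  set g : Fin d → Fin d → ℝ := fun i j =>
    x i ^ 2 * pd j (pd j f) x + x j ^ 2 * pd i (pd i f) x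
      - 2 * (x i * x j * pd i (pd j f) x) - x i * pd i f x - x j * pd j f x with hg
  have h1 : ∑ i, ∑ j ∈ Finset.Ioi i, DijF i j (DijF i j f) x
      = ∑ i, ∑ j ∈ Finset.Ioi i, g i j :=
    Finset.sum_congr rfl fun i _ => Finset.sum_congr rfl fun j hj =>
      DijF_DijF hf hsymm (Finset.mem_Ioi.mp hj).ne
  have h2 := sum_Ioi_of_symm g (fun i j => by simp only [hg, hsymm i j]; ring)
  have h3 : ∑ i, g i i = - 2 * xgrad f x := by
    rw [xgrad, Finset.mul_sum]
    exact Finset.sum_congr rfl fun i _ => by simp only [hg]; ring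
  have h4 : ∑ i, ∑ j, g i j = 2 * (eunorm x ^ 2 * ∑ i, pd i (pd i f) x)
      - 2 * ∑ i, ∑ j, x i * x j * pd i (pd j f) x - 2 * d * xgrad f x := by
    simp only [hg, Finset.sum_sub_distrib, Finset.sum_add_distrib, ← Finset.mul_sum,
      ← Finset.sum_mul, Finset.sum_const, Finset.card_univ, Fintype.card_fin, nsmul_eq_mul,
      eunorm_sq, xgrad, mul_assoc, mul_left_comm (_ : ℝ) (d : ℝ)]
    ring
  rw [h1]
  linarith

/-- The square of the Euler operator: `⟨x,∇⟩² f = Σ_{i,j} x_i x_j ∂_i∂_j f + ⟨x,∇⟩f`. -/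
theorem xgrad_xgrad {d : ℕ} {f : (Fin d → ℝ) → ℝ} {x : Fin d → ℝ}
    (hf : DifferentiableAt ℝ (fderiv ℝ f) x) :
    DifferentiableAt ℝ (xgrad f) x ∧
    xgrad (xgrad f) x = ∑ i, ∑ j, x i * x j * pd i (pd j f) x + xgrad f x := by
  have h := hf.hasFDerivAt.clm_apply (hasFDerivAt_id x)
  rw [show (fun y => fderiv ℝ f y (id y)) = xgrad f from
    funext fun y => (xgrad_eq_fderiv f y).symm] at h
  refine ⟨h.differentiableAt, ?_⟩
  rw [xgrad_eq_fderiv (xgrad f), h.fderiv, xgrad_eq_fderiv f]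
  have h2 : fderiv ℝ (fderiv ℝ f) x x x = ∑ i, ∑ j, x i * x j * pd i (pd j f) x := by
    simp only [pd_pd hf]
    rw [← ContinuousLinearMap.flip_apply, clm_apply_eq_sum]
    refine Finset.sum_congr rfl fun i _ => ?_
    rw [ContinuousLinearMap.flip_apply, clm_apply_eq_sum, Finset.mul_sum]
    exact Finset.sum_congr rfl fun j _ => (mul_assoc _ _ _).symm
  simp [h2, add_comm]

/-- the pointwise decomposition of the spectral operator
`𝒟_μ f(x) = (1−‖x‖²)^{−μ}‖x‖^{−d} ⟨x,∇⟩[‖y‖^{d−2}(1−‖y‖²)^{μ+1}⟨y,∇⟩f](x)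
 + ‖x‖^{−2} Σ_{i<j} D_{i,j}² f(x)` for `f` twice continuously differentiable near
`x ≠ 0` in the open unit ball. -/
theorem stmt5 (d : ℕ) (hd : 2 ≤ d) (μ : ℝ) (hμ : -1 < μ)
    (f : (Fin d → ℝ) → ℝ) (x : Fin d → ℝ)
    (hf : ContDiffAt ℝ 2 f x) (hx0 : x ≠ 0) (hx1 : eunorm x < 1) :
    DmuF d μ f x =
      (1 - eunorm x ^ 2) ^ (-μ) * (eunorm x) ^ (-(d : ℝ)) *
        xgrad (fun y =>
          (eunorm y) ^ ((d : ℝ) - 2) * (1 - eunorm y ^ 2) ^ (μ + 1) * xgrad f y) x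
      + (eunorm x) ^ (-(2 : ℝ)) *
          ∑ i, ∑ j ∈ Finset.Ioi i, DijF i j (DijF i j f) x := by
  have hdf : DifferentiableAt ℝ (fderiv ℝ f) x :=
    (hf.fderiv_right (m := 1) (by norm_num)).differentiableAt (by norm_num)
  have hsymm : ∀ i j, pd i (pd j f) x = pd j (pd i f) x := fun i j => by
    rw [pd_pd hdf, pd_pd hdf]
    exact hf.isSymmSndFDerivAt (by simp) _ _
  obtain ⟨hE, hEE⟩ := xgrad_xgrad hdf
  have hr := eunorm_pos hx0
  have hQ := sum_Ioi_of_symm (fun i j => x i * x j * pd i (pd j f) x)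
    (fun i j => by rw [hsymm i j]; ring)
  rw [xgrad_weighted hE hx0 hx1, sum_DijF_DijF hdf hsymm, hEE, Real.rpow_neg hr.le,
    Real.rpow_two, DmuF, hQ, ← xgrad]
  have hD : ∑ i, (1 - x i ^ 2) * pd i (pd i f) x =
      ∑ i, pd i (pd i f) x - ∑ i, x i * x i * pd i (pd i f) x := by
    rw [← Finset.sum_sub_distrib]
    exact Finset.sum_congr rfl fun i _ => by ring
  rw [hD]
  field_simp
  ring

end
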